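/- (Insertion resilience for P1.) If L ∈ valid A n B and Suc i < len L, then for every message M, ins(L, Suc i, M) ∉ valid A n B; i.e. no offer can be inserted between two offers of a valid chain while keeping the chain valid. -/

import Mathlib

inductive agent : Type
  | Server : agent
  | Friend : ℕ → agent
  | Spy : agent
deriving DecidableEq

inductive msg : Type
  | Agent : agent → msg
  | Number : ℕ → msg
  | Nonce : ℕ → msg
  | Key : ℕ → msg
  | Hash : msg → msg
  | MPair : msg → msg → msg
  | Crypt : ℕ → msg → msg
deriving DecidableEq

inductive partsP (H : Set msg) : msg → Prop
  | Inj : ∀ X, X ∈ H → partsP H X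
  | Fst : ∀ X Y, partsP H (msg.MPair X Y) → partsP H X
  | Snd : ∀ X Y, partsP H (msg.MPair X Y) → partsP H Y
  | Body : ∀ K X, partsP H (msg.Crypt K X) → partsP H X

/-- `parts H`: sub-components of messages of `H`. -/
def parts (H : Set msg) : Set msg := {X | partsP H X}

inductive analzP (invKey : ℕ → ℕ) (H : Set msg) : msg → Prop
  | Inj : ∀ X, X ∈ H → analzP invKey H X
  | Fst : ∀ X Y, analzP invKey H (msg.MPair X Y) → analzP invKey H X
  | Snd : ∀ X Y, analzP invKey H (msg.MPair X Y) → analzP invKey H Y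
  | Decrypt : ∀ K X, analzP invKey H (msg.Crypt K X) →
      analzP invKey H (msg.Key (invKey K)) → analzP invKey H X

/-- `analz invKey H`: what can be obtained by decomposing and decrypting messages of `H`. -/
def analz (invKey : ℕ → ℕ) (H : Set msg) : Set msg := {X | analzP invKey H X}

inductive synthP (H : Set msg) : msg → Prop
  | Inj : ∀ X, X ∈ H → synthP H X
  | Ag : ∀ a, synthP H (msg.Agent a)
  | Num : ∀ n, synthP H (msg.Number n)
  | Hsh : ∀ X, synthP H X → synthP H (msg.Hash X)
  | Pr : ∀ X Y, synthP H X → synthP H Y → synthP H (msg.MPair X Y)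
  | Cry : ∀ K X, synthP H X → msg.Key K ∈ H → synthP H (msg.Crypt K X)

/-- `synth H`: messages that can be synthesized from `H`. -/
def synth (H : Set msg) : Set msg := {X | synthP H X}

inductive guardP (invKey : ℕ → ℕ) (n : ℕ) (Ks : Set ℕ) : msg → Prop
  | No_Nonce : ∀ X, msg.Nonce n ∉ parts {X} → guardP invKey n Ks X
  | Guard : ∀ K X, invKey K ∈ Ks → guardP invKey n Ks (msg.Crypt K X)
  | Cry : ∀ K X, guardP invKey n Ks X → guardP invKey n Ks (msg.Crypt K X)
  | Pr : ∀ X Y, guardP invKey n Ks X → guardP invKey n Ks Y →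
      guardP invKey n Ks (msg.MPair X Y)

/-- `guard n Ks`: messages in which `Nonce n` is guarded by the keys of `Ks`. -/
def guardMsg (invKey : ℕ → ℕ) (n : ℕ) (Ks : Set ℕ) : Set msg := {X | guardP invKey n Ks X}

/-- `Guard n Ks H`: every message of `H` lies in `guard n Ks`. -/
def Guard (invKey : ℕ → ℕ) (n : ℕ) (Ks : Set ℕ) (H : Set msg) : Prop :=
  ∀ X ∈ H, X ∈ guardMsg invKey n Ks
/-- The empty encoded list: a fixed atomic message. -/
def nilm : msg := msg.Number 0

/-- Cons on encoded lists. -/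
def consm (X L : msg) : msg := msg.MPair X L

/-- Head of an encoded list. -/
def headm : msg → msg
  | msg.MPair X _ => X
  | _ => nilm

/-- Tail of an encoded list. -/
def tailm : msg → msg
  | msg.MPair _ L => L
  | _ => nilm

/-- Length of an encoded list. -/
def lenm : msg → ℕ
  | msg.MPair _ L => lenm L + 1
  | _ => 0

/-- `ith L i` is the `i+1`-th element of `L`. -/
def ith : msg → ℕ → msg
  | L, 0 => headm L
  | L, i + 1 => ith (tailm L) i

/-- `repl L i M` is `L` with its `i+1`-th element replaced by `M`. -/
def repl : msg → ℕ → msg → msg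
  | msg.MPair _ L, 0, M => msg.MPair M L
  | msg.MPair X L, i + 1, M => msg.MPair X (repl L i M)
  | L, _, _ => L

/-- `insm L i M` is `L` with `M` inserted before the `i+1`-th element of `L`. -/
def insm : msg → ℕ → msg → msg
  | L, 0, M => msg.MPair M L
  | msg.MPair X L, i + 1, M => msg.MPair X (insm L i M)
  | L, _, _ => L

/-- `trunc L i` truncates the `i` first elements of `L`. -/
def trunc : msg → ℕ → msg
  | L, 0 => L
  | msg.MPair _ L, i + 1 => trunc L i
  | L, _ => L
/-- `sign B X = ⟨Agent B, X, Crypt (priK B) (Hash X)⟩`. -/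
def sign (invKey : ℕ → ℕ) (pubK : agent → ℕ) (B : agent) (X : msg) : msg :=
  msg.MPair (msg.Agent B) (msg.MPair X (msg.Crypt (invKey (pubK B)) (msg.Hash X)))

/-- The chaining relation of protocol P1. -/
def chain (invKey : ℕ → ℕ) (pubK : agent → ℕ) (B : agent) (ofr : ℕ) (A : agent)
    (L : msg) (C : agent) : msg :=
  sign invKey pubK B (msg.MPair (msg.Crypt (pubK A) (msg.Nonce ofr))
    (msg.Hash (msg.MPair (headm L) (msg.Agent C))))

/-- The start of the chaining relation. -/
def anchor (invKey : ℕ → ℕ) (pubK : agent → ℕ) (A : agent) (n : ℕ) (B : agent) : msg :=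
  chain invKey pubK A n A (consm nilm nilm) B

/-- The signer of an offer `chain B ofr A L C`, i.e. `Agent B`. -/
def shop (M : msg) : msg := headm M

/-- The designated next server of an offer `chain B ofr A L C`, i.e. `C`. -/
def next_shop : msg → agent
  | msg.MPair _ (msg.MPair (msg.MPair _ (msg.Hash (msg.MPair _ (msg.Agent C)))) _) => C
  | _ => agent.Server
/-- Valid chains of offers for protocol P1. -/
inductive validP (invKey : ℕ → ℕ) (pubK : agent → ℕ) (A : agent) (n : ℕ) (B : agent) :
    msg → Prop
  | Req : validP invKey pubK A n B (consm (anchor invKey pubK A n B) nilm)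
  | Prop : ∀ L ofr C, validP invKey pubK A n B L →
      validP invKey pubK A n B
        (consm (chain invKey pubK (next_shop (headm L)) ofr A L C) L)

def valid (invKey : ℕ → ℕ) (pubK : agent → ℕ) (A : agent) (n : ℕ) (B : agent) : Set msg :=
  {L | validP invKey pubK A n B L}

/-!
Every non-initial offer of a P1 chain contains a hash of the offer before it, and hashes are free
constructors, so an offer determines its predecessor. If `M` is inserted between `X` and its
predecessor `Y`, then `X` commits both to `Y` and to `M`, whence `M = Y`; but `M` in turn must
commit to `Y`, and no message contains a hash of itself.
-/

theorem exists_eq_consm_of_lenm_pos {L : msg} (h : 0 < lenm L) : ∃ X T, L = consm X T := by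
  cases L with
  | MPair X T => exact ⟨X, T, rfl⟩
  | _ => simp [lenm] at h

theorem lenm_insm {L : msg} {i : ℕ} (M : msg) (hi : i ≤ lenm L) :
    lenm (insm L i M) = lenm L + 1 := by
  induction i generalizing L with
  | zero => simp only [insm, lenm]
  | succ i ih =>
    obtain ⟨X, T, rfl⟩ := exists_eq_consm_of_lenm_pos (Nat.zero_lt_of_lt hi)
    exact congrArg (· + 1) (ih (Nat.le_of_succ_le_succ hi))

theorem ith_insm_of_lt {i j : ℕ} (L M : msg) (hj : j < i) : ith (insm L i M) j = ith L j := by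
  fun_induction insm L i M generalizing j with
  | case1 => exact absurd hj j.not_lt_zero
  | case2 X T i M ih =>
    cases j with
    | zero => rfl
    | succ j => exact ih (Nat.lt_of_succ_lt_succ hj)
  | case3 => rfl

theorem ith_insm_self {L : msg} {i : ℕ} (M : msg) (hi : i ≤ lenm L) :
    ith (insm L i M) i = M := by
  induction i generalizing L with
  | zero => simp only [insm, ith, headm]
  | succ i ih =>
    obtain ⟨X, T, rfl⟩ := exists_eq_consm_of_lenm_pos (Nat.zero_lt_of_lt hi)
    exact ih (Nat.le_of_succ_le_succ hi)

theorem ith_insm_succ_of_le {L : msg} {i j : ℕ} (M : msg) (hi : i ≤ lenm L) (hj : i ≤ j) :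
    ith (insm L i M) (j + 1) = ith L j := by
  induction i generalizing L j with
  | zero => simp only [insm, ith, tailm]
  | succ i ih =>
    obtain ⟨X, T, rfl⟩ := exists_eq_consm_of_lenm_pos (Nat.zero_lt_of_lt hi)
    obtain ⟨j, rfl⟩ := Nat.exists_eq_add_one_of_ne_zero (Nat.ne_zero_of_lt hj)
    exact ih (Nat.le_of_succ_le_succ hi) (Nat.le_of_succ_le_succ hj)

/-- `CommitsTo X Y` says that the offer `X` carries a hash of `Y` in the position where
`chain B ofr A L C` carries the hash of `headm L`; the signer, the encrypted price, the designated
next server and the signature of `X` are arbitrary messages. -/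
def CommitsTo (X Y : msg) : Prop :=
  ∃ signer price next signature,
    X = msg.MPair signer
      (msg.MPair (msg.MPair price (msg.Hash (msg.MPair Y next))) signature)

theorem CommitsTo.right_unique {X Y Z : msg} (hY : CommitsTo X Y) (hZ : CommitsTo X Z) :
    Y = Z := by
  obtain ⟨_, _, _, _, rfl⟩ := hY
  obtain ⟨_, _, _, _, hX⟩ := hZ
  simp only [msg.MPair.injEq, msg.Hash.injEq] at hX
  exact hX.2.1.2.1

theorem CommitsTo.sizeOf_lt {X Y : msg} (h : CommitsTo X Y) : sizeOf Y < sizeOf X := by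
  obtain ⟨_, _, _, _, rfl⟩ := h
  simp only [msg.MPair.sizeOf_spec, msg.Hash.sizeOf_spec]
  omega

theorem not_commitsTo_self (X : msg) : ¬ CommitsTo X X :=
  fun h => lt_irrefl _ h.sizeOf_lt

theorem commitsTo_chain (invKey : ℕ → ℕ) (pubK : agent → ℕ) (B : agent) (ofr : ℕ) (A : agent)
    (L : msg) (C : agent) : CommitsTo (chain invKey pubK B ofr A L C) (headm L) :=
  ⟨_, _, _, _, rfl⟩

/-- An encoded list is hash-linked if each of its elements commits to the next one. Encoded lists
grow at the head, so the next element is the offer made just before. -/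
def HashLinked (L : msg) : Prop :=
  ∀ i, i + 1 < lenm L → CommitsTo (ith L i) (ith L (i + 1))

theorem HashLinked.consm {X L : msg} (hL : HashLinked L) (hX : CommitsTo X (headm L)) :
    HashLinked (consm X L)
  | 0, _ => hX
  | i + 1, hi => hL i (Nat.lt_of_succ_lt_succ hi)

theorem hashLinked_of_mem_valid {invKey : ℕ → ℕ} {pubK : agent → ℕ} {A B : agent} {n : ℕ}
    {L : msg} (hL : L ∈ valid invKey pubK A n B) : HashLinked L := by
  induction hL
  case Req => exact fun i hi => absurd hi (by simp [consm, nilm, lenm])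
  next L ofr C _ ih => exact ih.consm (commitsTo_chain ..)

theorem insertion_resilience_general {L : msg} {i : ℕ} (hL : HashLinked L)
    (hlen : i + 1 < lenm L) (M : msg) : ¬ HashLinked (insm L (i + 1) M) := by
  intro hins
  have commits_old : CommitsTo (ith L i) (ith L (i + 1)) := hL i hlen
  have commits_inserted : CommitsTo (ith L i) M := by
    have h := hins i (by rw [lenm_insm M hlen.le]; omega)
    rwa [ith_insm_of_lt L M i.lt_succ_self, ith_insm_self M hlen.le] at h
  have inserted_commits : CommitsTo M (ith L (i + 1)) := by
    have h := hins (i + 1) (by rw [lenm_insm M hlen.le]; omega)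
    rwa [ith_insm_self M hlen.le, ith_insm_succ_of_le M hlen.le le_rfl] at h
  rw [← commits_inserted.right_unique commits_old] at inserted_commits
  exact not_commitsTo_self M inserted_commits

/-- Insertion resilience for P1: no offer can be inserted between two offers
of a valid chain while keeping the chain valid. -/
theorem insertion_resilience
    (invKey : ℕ → ℕ) (pubK : agent → ℕ)
    (hinv : ∀ K, invKey (invKey K) = K)
    (A B : agent) (n : ℕ) (L : msg) (i : ℕ)
    (hL : L ∈ valid invKey pubK A n B)
    (hlen : i + 1 < lenm L) :
    ∀ M : msg, insm L (i + 1) M ∉ valid invKey pubK A n B :=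
  fun M hM => insertion_resilience_general (hashLinked_of_mem_valid hL) hlen M
    (hashLinked_of_mem_valid hM)
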